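/- Let n ≥ 2 and let a : 2^{{1,…,n}} → ℝ be a set function with a(∅) = 0 and Σ_{S ⊆ {1,…,n}} a(S) = 1, chosen so that C_a(x) = Σ_{S ⊆ {1,…,n}} a(S) min_{i ∈ S} x_i is nondecreasing in each variable (a discrete Choquet integral). Then the orness average value of C_a over [0,1]^n equals (1/(n−1)) Σ_{S ⊆ {1,…,n}} a(S) (n − |S|)/(|S| + 1). -/

import Mathlib

/-!
A function `G` invariant under `x ↦ c • x + d • 1`, `c > 0`, satisfies
`∫_{(a,b)ⁿ} G = (b - a)ⁿ ∫_{(0,1)ⁿ} G`. Integrating over the level `t` of the superlevel sets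
`{t < min} = (t,1)ⁿ` and `{t < 1 - max} = (0,1-t)ⁿ` gives
`∫ G · min = ∫ G · (1 - max) = (∫ G) / (n + 1)`, so `∫ G · (max - min) = (n - 1) / (n + 1) · ∫ G`.
For `G = odf_F` the left side is `∫ F - ∫ min`: the denominator `max - min` has disappeared.
For `F = C_a` it remains to integrate `min_{i ∈ S} x_i`, which gives `1 / (|S| + 1)`.
-/

open MeasureTheory

/-- The discrete Choquet integral (Lovász extension) associated with a set function
`a : 2^{[n]} → ℝ`: `C_a(x) = Σ_{S ⊆ [n]} a(S) min_{i ∈ S} x_i`, with the convention that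
the term for `S = ∅` contributes `0`. -/
noncomputable def choquet {n : ℕ} (a : Finset (Fin n) → ℝ) (x : Fin n → ℝ) : ℝ :=
  ∑ S : Finset (Fin n), a S * (if h : S.Nonempty then S.inf' h x else 0)

section LayerCake

variable {α : Type*} [MeasurableSpace α] {μ : Measure α} [SFinite μ] {G f : α → ℝ}

lemma integral_mul_eq_integral_setIntegral_lt (hG : Integrable G μ) (hf : Measurable f)
    (hf01 : ∀ᵐ x ∂μ, f x ∈ Set.Icc 0 1) :
    ∫ x, G x * f x ∂μ = ∫ t in Set.Ioo (0 : ℝ) 1, ∫ x in {x | t < f x}, G x ∂μ := by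
  let subgraph : Set (α × ℝ) := {p | p.2 < f p.1}
  have hsub : MeasurableSet subgraph := measurableSet_lt measurable_snd (hf.comp measurable_fst)
  have hint : Integrable (subgraph.indicator fun p => G p.1)
      (μ.prod (volume.restrict (Set.Ioo (0 : ℝ) 1))) :=
    (hG.comp_fst _).indicator hsub
  have hslice : ∀ᵐ x ∂μ,
      ∫ t in Set.Ioo (0 : ℝ) 1, subgraph.indicator (fun p => G p.1) (x, t) = G x * f x := by
    filter_upwards [hf01] with x hx
    calc ∫ t in Set.Ioo (0 : ℝ) 1, subgraph.indicator (fun p => G p.1) (x, t)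
        = ∫ t in Set.Ioo (0 : ℝ) 1, (Set.Iio (f x)).indicator (fun _ => G x) t := rfl
      _ = G x * f x := by
        rw [setIntegral_indicator measurableSet_Iio, Set.Ioo_inter_Iio, min_eq_right hx.2,
          setIntegral_const, Real.volume_real_Ioo_of_le hx.1, smul_eq_mul, sub_zero, mul_comm]
  calc ∫ x, G x * f x ∂μ
      = ∫ x, (∫ t in Set.Ioo (0 : ℝ) 1, subgraph.indicator (fun p => G p.1) (x, t)) ∂μ :=
        (integral_congr_ae hslice).symm
    _ = ∫ t in Set.Ioo (0 : ℝ) 1, (∫ x, subgraph.indicator (fun p => G p.1) (x, t) ∂μ) :=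
        integral_integral_swap hint
    _ = ∫ t in Set.Ioo (0 : ℝ) 1, ∫ x in {x | t < f x}, G x ∂μ := by
        congr! 2 with t
        exact integral_indicator (measurableSet_lt measurable_const hf)

lemma setIntegral_one_sub_pow (k : ℕ) :
    ∫ t in Set.Ioo (0 : ℝ) 1, (1 - t) ^ k = 1 / ((k : ℝ) + 1) := by
  rw [← integral_Ioc_eq_integral_Ioo, ← intervalIntegral.integral_of_le zero_le_one,
    intervalIntegral.integral_comp_sub_left (fun t : ℝ => t ^ k), integral_pow]
  simp

lemma integral_mul_eq_div_of_setIntegral_lt_eq_pow (hG : Integrable G μ) (hf : Measurable f)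
    (hf01 : ∀ᵐ x ∂μ, f x ∈ Set.Icc 0 1) {k : ℕ} {A : ℝ}
    (hpow : ∀ t ∈ Set.Ioo (0 : ℝ) 1, ∫ x in {x | t < f x}, G x ∂μ = (1 - t) ^ k * A) :
    ∫ x, G x * f x ∂μ = A / (k + 1) := by
  rw [integral_mul_eq_integral_setIntegral_lt hG hf hf01,
    setIntegral_congr_fun measurableSet_Ioo hpow, integral_mul_const, setIntegral_one_sub_pow,
    one_div_mul_eq_div]

end LayerCake

/-- The open unit cube `(0,1)^ι`, over which orness averages are taken. -/
def unitCube (ι : Type*) : Set (ι → ℝ) := Set.univ.pi fun _ => Set.Ioo 0 1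

/-- Invariance under a common positive affine change of all coordinates, that is, of the interval
scale on which they are measured. Orness distribution functions have this property. -/
def PosAffineInvariant {ι : Type*} (G : (ι → ℝ) → ℝ) : Prop :=
  ∀ ⦃c : ℝ⦄, 0 < c → ∀ (d : ℝ) (x : ι → ℝ), G (fun i => c * x i + d) = G x

/-- Compatibility with a common positive affine change of all coordinates, the property of minima,
maxima and Choquet integrals that makes their orness distribution functions invariant. -/
def PosAffineEquivariant {ι : Type*} (F : (ι → ℝ) → ℝ) : Prop :=
  ∀ ⦃c : ℝ⦄, 0 < c → ∀ (d : ℝ) (x : ι → ℝ), F (fun i => c * x i + d) = c * F x + d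

section Coordinates

variable {ι : Type*}

lemma inf'_mem_Ioo_of_mem_unitCube {S : Finset ι} (hS : S.Nonempty) {x : ι → ℝ}
    (hx : x ∈ unitCube ι) : S.inf' hS x ∈ Set.Ioo 0 1 := by
  obtain ⟨i, -, hi⟩ := S.exists_mem_eq_inf' hS x
  exact hi ▸ hx i trivial

lemma sup'_mem_Ioo_of_mem_unitCube {S : Finset ι} (hS : S.Nonempty) {x : ι → ℝ}
    (hx : x ∈ unitCube ι) : S.sup' hS x ∈ Set.Ioo 0 1 := by
  obtain ⟨i, -, hi⟩ := S.exists_mem_eq_sup' hS x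
  exact hi ▸ hx i trivial

lemma continuous_inf'_coord (S : Finset ι) (hS : S.Nonempty) :
    Continuous fun x : ι → ℝ => S.inf' hS x :=
  Continuous.finset_inf'_apply hS fun i _ => continuous_apply i

lemma continuous_sup'_coord (S : Finset ι) (hS : S.Nonempty) :
    Continuous fun x : ι → ℝ => S.sup' hS x :=
  Continuous.finset_sup'_apply hS fun i _ => continuous_apply i

lemma monotone_const_mul_add_const {c : ℝ} (hc : 0 ≤ c) (d : ℝ) :
    Monotone fun t : ℝ => c * t + d :=
  (monotone_id.const_mul hc).add_const d

lemma posAffineEquivariant_inf' (S : Finset ι) (hS : S.Nonempty) :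
    PosAffineEquivariant fun x : ι → ℝ => S.inf' hS x := fun c hc d x =>
  (Finset.apply_inf'_eq_inf'_comp (f := x) hS (fun t => c * t + d)
    (monotone_const_mul_add_const hc.le d).map_inf).symm

lemma posAffineEquivariant_sup' (S : Finset ι) (hS : S.Nonempty) :
    PosAffineEquivariant fun x : ι → ℝ => S.sup' hS x := fun c hc d x =>
  (Finset.apply_sup'_eq_sup'_comp (f := x) hS (fun t => c * t + d)
    (monotone_const_mul_add_const hc.le d).map_sup).symm

lemma PosAffineEquivariant.apply_const {F : (ι → ℝ) → ℝ} (hF : PosAffineEquivariant F) (d : ℝ) :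
    F (fun _ => d) = d := by
  have h := hF two_pos (-d) fun _ => d
  rw [show (fun _ : ι => 2 * d + -d) = fun _ => d by ext; ring] at h
  linarith

lemma unitCube_subset_Icc : unitCube ι ⊆ Set.Icc 0 1 := fun _ hx =>
  ⟨fun i => (hx i trivial).1.le, fun i => (hx i trivial).2.le⟩

lemma measurableSet_unitCube [Countable ι] : MeasurableSet (unitCube ι) :=
  MeasurableSet.univ_pi fun _ => measurableSet_Ioo

variable [Fintype ι]

lemma volume_unitCube : volume (unitCube ι) = 1 := by
  simp [unitCube, volume_pi_pi]

lemma integrableOn_unitCube_of_continuous {F : (ι → ℝ) → ℝ} (hF : Continuous F) :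
    IntegrableOn F (unitCube ι) :=
  hF.integrableOn_Icc.mono_set unitCube_subset_Icc

lemma integrableOn_unitCube_mul_of_continuous {G f : (ι → ℝ) → ℝ}
    (hG : IntegrableOn G (unitCube ι)) (hf : Continuous f) :
    IntegrableOn (fun x => G x * f x) (unitCube ι) :=
  hG.mul_continuousOn_of_subset hf.continuousOn measurableSet_unitCube isCompact_Icc
    unitCube_subset_Icc

lemma volume_real_setOf_lt_inf'_inter_unitCube (S : Finset ι) (hS : S.Nonempty) {t : ℝ}
    (ht : t ∈ Set.Ioo 0 1) :
    volume.real ({x | t < S.inf' hS x} ∩ unitCube ι) = (1 - t) ^ S.card := by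
  classical
  have hbox : {x | t < S.inf' hS x} ∩ unitCube ι =
      Set.univ.pi fun i => if i ∈ S then Set.Ioo t 1 else Set.Ioo 0 1 := by
    ext x
    simp only [unitCube, Set.mem_inter_iff, Set.mem_ofPred_eq, Finset.lt_inf'_iff, Set.mem_pi,
      Set.mem_univ, true_imp_iff, ← forall_and]
    refine forall_congr' fun i => ?_
    have := ht.1
    split_ifs <;> grind
  have hside (i : ι) : volume.real (if i ∈ S then Set.Ioo t 1 else Set.Ioo 0 1) =
      if i ∈ S then 1 - t else 1 := by
    split_ifs <;> simp [ht.2.le]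
  rw [hbox, volume_pi, measureReal_def, Measure.pi_pi, ENNReal.toReal_prod]
  simp only [← measureReal_def, hside, Fintype.prod_ite_mem, Finset.prod_const]

lemma setIntegral_unitCube_inf' (S : Finset ι) (hS : S.Nonempty) :
    ∫ x in unitCube ι, S.inf' hS x = 1 / ((S.card : ℝ) + 1) := by
  have h := integral_mul_eq_div_of_setIntegral_lt_eq_pow (G := fun _ => 1) (k := S.card) (A := 1)
    (integrableOn_unitCube_of_continuous continuous_const) (continuous_inf'_coord S hS).measurable
    ((ae_restrict_mem measurableSet_unitCube).mono fun x hx =>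
      Set.Ioo_subset_Icc_self (inf'_mem_Ioo_of_mem_unitCube hS hx)) fun t ht => by
    have hmeas : MeasurableSet {x : ι → ℝ | t < S.inf' hS x} :=
      measurableSet_lt measurable_const (continuous_inf'_coord S hS).measurable
    rw [Measure.restrict_restrict hmeas, setIntegral_const,
      volume_real_setOf_lt_inf'_inter_unitCube S hS ht, smul_eq_mul]
  simpa only [one_mul] using h

open scoped Pointwise in
lemma PosAffineInvariant.setIntegral_pi_Ioo {G : (ι → ℝ) → ℝ} (hG : PosAffineInvariant G)
    {a b : ℝ} (hab : a < b) :
    ∫ x in Set.univ.pi fun _ => Set.Ioo a b, G x =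
      (b - a) ^ Fintype.card ι * ∫ x in unitCube ι, G x := by
  have hc : 0 < b - a := sub_pos.2 hab
  let shift : (ι → ℝ) → ι → ℝ := fun x => x + fun _ => a
  have hbox : shift ⁻¹' (Set.univ.pi fun _ => Set.Ioo a b) = (b - a) • unitCube ι := by
    rw [unitCube, smul_univ_pi]
    ext x
    simp [shift, LinearOrderedField.smul_Ioo hc, lt_sub_iff_add_lt]
  calc ∫ x in Set.univ.pi fun _ => Set.Ioo a b, G x
      = ∫ x in (b - a) • unitCube ι, G (shift x) := by
        rw [← hbox, (measurePreserving_add_right volume fun _ : ι => a).setIntegral_preimage_emb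
          (measurableEmbedding_addRight _)]
    _ = (b - a) ^ Fintype.card ι * ∫ x in unitCube ι, G (shift ((b - a) • x)) := by
        rw [Measure.setIntegral_comp_smul_of_pos volume (fun x => G (shift x)) _ hc,
          Module.finrank_fintype_fun_eq_card, smul_eq_mul,
          mul_inv_cancel_left₀ (pow_pos hc _).ne']
    _ = (b - a) ^ Fintype.card ι * ∫ x in unitCube ι, G x := by
        congr! 3 with x
        exact hG hc a x

end Coordinates

section OrnessDistribution

variable {ι : Type*} [Fintype ι] [Nonempty ι]

/-- The smallest coordinate `min_i x_i`. -/
noncomputable def minCoord (x : ι → ℝ) : ℝ := Finset.univ.inf' Finset.univ_nonempty x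

/-- The largest coordinate `max_i x_i`. -/
noncomputable def maxCoord (x : ι → ℝ) : ℝ := Finset.univ.sup' Finset.univ_nonempty x

/-- The orness distribution function `odf_F`; on the diagonal, where it is undefined on paper,
division by zero gives it the value `0`. -/
noncomputable def ornessDistribution (F : (ι → ℝ) → ℝ) (x : ι → ℝ) : ℝ :=
  (F x - minCoord x) / (maxCoord x - minCoord x)

lemma continuous_minCoord : Continuous (minCoord : (ι → ℝ) → ℝ) := continuous_inf'_coord _ _

lemma continuous_maxCoord : Continuous (maxCoord : (ι → ℝ) → ℝ) := continuous_sup'_coord _ _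

lemma posAffineEquivariant_minCoord : PosAffineEquivariant (minCoord : (ι → ℝ) → ℝ) :=
  posAffineEquivariant_inf' _ _

lemma posAffineEquivariant_maxCoord : PosAffineEquivariant (maxCoord : (ι → ℝ) → ℝ) :=
  posAffineEquivariant_sup' _ _

lemma minCoord_le (x : ι → ℝ) (i : ι) : minCoord x ≤ x i := Finset.inf'_le x (Finset.mem_univ i)

lemma le_maxCoord (x : ι → ℝ) (i : ι) : x i ≤ maxCoord x := Finset.le_sup' x (Finset.mem_univ i)

lemma minCoord_le_maxCoord (x : ι → ℝ) : minCoord x ≤ maxCoord x :=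
  (minCoord_le x (Classical.arbitrary ι)).trans (le_maxCoord x _)

lemma eq_const_of_minCoord_eq_maxCoord {x : ι → ℝ} (h : minCoord x = maxCoord x) :
    x = fun _ => minCoord x :=
  funext fun i => ((le_maxCoord x i).trans_eq h.symm).antisymm (minCoord_le x i)

section SetIntegral

variable {G : (ι → ℝ) → ℝ}

lemma PosAffineInvariant.setIntegral_mul_minCoord (hG : PosAffineInvariant G)
    (hint : IntegrableOn G (unitCube ι)) :
    ∫ x in unitCube ι, G x * minCoord x = (∫ x in unitCube ι, G x) / (Fintype.card ι + 1) := by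
  refine integral_mul_eq_div_of_setIntegral_lt_eq_pow hint continuous_minCoord.measurable
    ((ae_restrict_mem measurableSet_unitCube).mono fun x hx =>
      Set.Ioo_subset_Icc_self (inf'_mem_Ioo_of_mem_unitCube _ hx)) fun t ht => ?_
  have hbox : {x | t < minCoord x} ∩ unitCube ι = Set.univ.pi fun _ => Set.Ioo t 1 := by
    ext x
    simp only [minCoord, unitCube, Set.mem_inter_iff, Set.mem_ofPred_eq, Finset.lt_inf'_iff,
      Finset.mem_univ, Set.mem_pi, Set.mem_univ, true_imp_iff, ← forall_and]
    exact forall_congr' fun i =>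
      ⟨fun h => ⟨h.1, h.2.2⟩, fun h => ⟨h.1, ht.1.trans h.1, h.2⟩⟩
  rw [Measure.restrict_restrict (measurableSet_lt measurable_const continuous_minCoord.measurable),
    hbox, hG.setIntegral_pi_Ioo ht.2]

lemma PosAffineInvariant.setIntegral_mul_one_sub_maxCoord (hG : PosAffineInvariant G)
    (hint : IntegrableOn G (unitCube ι)) :
    ∫ x in unitCube ι, G x * (1 - maxCoord x) =
      (∫ x in unitCube ι, G x) / (Fintype.card ι + 1) := by
  have hmeas : Measurable fun x : ι → ℝ => 1 - maxCoord x :=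
    continuous_maxCoord.measurable.const_sub 1
  refine integral_mul_eq_div_of_setIntegral_lt_eq_pow hint hmeas
    ((ae_restrict_mem measurableSet_unitCube).mono fun x hx =>
      Set.Ioo_subset_Icc_self (Set.Ioo.one_sub_mem (sup'_mem_Ioo_of_mem_unitCube _ hx)))
    fun t ht => ?_
  have hbox : {x | t < 1 - maxCoord x} ∩ unitCube ι = Set.univ.pi fun _ => Set.Ioo 0 (1 - t) := by
    ext x
    simp only [lt_sub_comm (a := t), maxCoord, unitCube, Set.mem_inter_iff, Set.mem_ofPred_eq,
      Finset.sup'_lt_iff, Finset.mem_univ, Set.mem_pi, Set.mem_univ, true_imp_iff, ← forall_and]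
    exact forall_congr' fun i =>
      ⟨fun h => ⟨h.2.1, h.1⟩, fun h => ⟨h.2, h.1, h.2.trans (sub_lt_self 1 ht.1)⟩⟩
  rw [Measure.restrict_restrict (measurableSet_lt measurable_const hmeas), hbox,
    hG.setIntegral_pi_Ioo (sub_pos.2 ht.2), sub_zero]

lemma PosAffineInvariant.setIntegral_mul_maxCoord_sub_minCoord (hG : PosAffineInvariant G)
    (hint : IntegrableOn G (unitCube ι)) :
    ∫ x in unitCube ι, G x * (maxCoord x - minCoord x) =
      (Fintype.card ι - 1) / (Fintype.card ι + 1) * ∫ x in unitCube ι, G x := by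
  have hmin := integrableOn_unitCube_mul_of_continuous hint continuous_minCoord
  have hmax : IntegrableOn (fun x => G x * (1 - maxCoord x)) (unitCube ι) :=
    integrableOn_unitCube_mul_of_continuous hint (continuous_const.sub continuous_maxCoord)
  calc ∫ x in unitCube ι, G x * (maxCoord x - minCoord x)
      = ∫ x in unitCube ι, (G x - G x * (1 - maxCoord x) - G x * minCoord x) := by
        congr! 2 with x
        ring
    _ = (∫ x in unitCube ι, G x) - (∫ x in unitCube ι, G x) / (Fintype.card ι + 1) -
          (∫ x in unitCube ι, G x) / (Fintype.card ι + 1) := by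
        rw [integral_sub (hint.fun_sub hmax) hmin, integral_sub hint hmax,
          hG.setIntegral_mul_one_sub_maxCoord hint, hG.setIntegral_mul_minCoord hint]
    _ = (Fintype.card ι - 1) / (Fintype.card ι + 1) * ∫ x in unitCube ι, G x := by
        field_simp
        ring

end SetIntegral

variable {F : (ι → ℝ) → ℝ}

lemma PosAffineEquivariant.posAffineInvariant_ornessDistribution (hF : PosAffineEquivariant F) :
    PosAffineInvariant (ornessDistribution F) := fun c hc d x => by
  rw [ornessDistribution, hF hc, posAffineEquivariant_minCoord hc,
    posAffineEquivariant_maxCoord hc, add_sub_add_right_eq_sub, add_sub_add_right_eq_sub,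
    ← mul_sub, ← mul_sub, mul_div_mul_left _ _ hc.ne', ornessDistribution]

lemma PosAffineEquivariant.ornessDistribution_mul (hF : PosAffineEquivariant F) (x : ι → ℝ) :
    ornessDistribution F x * (maxCoord x - minCoord x) = F x - minCoord x := by
  refine div_mul_cancel_of_imp fun h => ?_
  rw [eq_const_of_minCoord_eq_maxCoord (sub_eq_zero.1 h).symm, hF.apply_const,
    posAffineEquivariant_minCoord.apply_const, sub_self]

lemma integrableOn_ornessDistribution_of_bound (hF : Measurable F) {C : ℝ}
    (hC : ∀ x, |F x - minCoord x| ≤ C * (maxCoord x - minCoord x)) :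
    IntegrableOn (ornessDistribution F) (unitCube ι) := by
  have hmeas : Measurable (ornessDistribution F) :=
    (hF.sub continuous_minCoord.measurable).div
      (continuous_maxCoord.measurable.sub continuous_minCoord.measurable)
  refine .of_bound (volume_unitCube.trans_lt ENNReal.one_lt_top) hmeas.aestronglyMeasurable |C|
    (.of_forall fun x => ?_)
  have hrange : 0 ≤ maxCoord x - minCoord x := sub_nonneg.2 (minCoord_le_maxCoord x)
  rw [ornessDistribution, Real.norm_eq_abs, abs_div, abs_of_nonneg hrange]
  exact div_le_of_le_mul₀ hrange (abs_nonneg C)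
    ((hC x).trans (mul_le_mul_of_nonneg_right (le_abs_self C) hrange))

theorem PosAffineEquivariant.setIntegral_ornessDistribution {ι : Type*} [Fintype ι] [Nontrivial ι]
    {F : (ι → ℝ) → ℝ} (hF : PosAffineEquivariant F)
    (hint : IntegrableOn (ornessDistribution F) (unitCube ι)) :
    ∫ x in unitCube ι, ornessDistribution F x =
      ((Fintype.card ι + 1) * (∫ x in unitCube ι, F x) - 1) / (Fintype.card ι - 1) := by
  have hrange : IntegrableOn (fun x => ornessDistribution F x * (maxCoord x - minCoord x))
      (unitCube ι) :=
    integrableOn_unitCube_mul_of_continuous hint (continuous_maxCoord.sub continuous_minCoord)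
  have hsplit : ∫ x in unitCube ι, F x = 1 / ((Fintype.card ι : ℝ) + 1) +
      (Fintype.card ι - 1) / (Fintype.card ι + 1) * ∫ x in unitCube ι, ornessDistribution F x := by
    calc ∫ x in unitCube ι, F x
        = ∫ x in unitCube ι,
            (minCoord x + ornessDistribution F x * (maxCoord x - minCoord x)) := by
          simp only [hF.ornessDistribution_mul, add_sub_cancel]
      _ = 1 / ((Fintype.card ι : ℝ) + 1) + (Fintype.card ι - 1) / (Fintype.card ι + 1) *
            ∫ x in unitCube ι, ornessDistribution F x := by
          rw [integral_add (integrableOn_unitCube_of_continuous continuous_minCoord) hrange,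
            hF.posAffineInvariant_ornessDistribution.setIntegral_mul_maxCoord_sub_minCoord hint]
          simp only [minCoord, setIntegral_unitCube_inf', Finset.card_univ]
  have hcard : (Fintype.card ι : ℝ) - 1 ≠ 0 :=
    (sub_pos.2 (Nat.one_lt_cast.2 Fintype.one_lt_card)).ne'
  rw [hsplit]
  field_simp
  ring

end OrnessDistribution


section MinCoordOn

variable {ι : Type*}

/-- The term `min_{i ∈ S} x_i` of a Choquet integral, equal to `0` for `S = ∅`. -/
noncomputable def minCoordOn (S : Finset ι) (x : ι → ℝ) : ℝ :=
  if h : S.Nonempty then S.inf' h x else 0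

lemma minCoordOn_empty : minCoordOn (∅ : Finset ι) = fun _ => 0 :=
  funext fun _ => dif_neg Finset.not_nonempty_empty

lemma minCoordOn_of_nonempty {S : Finset ι} (hS : S.Nonempty) :
    minCoordOn S = fun x => S.inf' hS x :=
  funext fun _ => dif_pos hS

lemma continuous_minCoordOn (S : Finset ι) : Continuous (minCoordOn S) := by
  rcases S.eq_empty_or_nonempty with rfl | hS
  · exact minCoordOn_empty ▸ continuous_const
  · exact minCoordOn_of_nonempty hS ▸ continuous_inf'_coord S hS

lemma abs_minCoordOn_sub_minCoord_le [Fintype ι] [Nonempty ι] {S : Finset ι} (hS : S.Nonempty)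
    (x : ι → ℝ) : |minCoordOn S x - minCoord x| ≤ maxCoord x - minCoord x := by
  obtain ⟨i, -, hi⟩ := S.exists_mem_eq_inf' hS x
  simp only [minCoordOn_of_nonempty hS, hi]
  rw [abs_of_nonneg (sub_nonneg.2 (minCoord_le x i))]
  exact sub_le_sub_right (le_maxCoord x i) _

end MinCoordOn

section Choquet

variable {n : ℕ} {a : Finset (Fin n) → ℝ}

lemma choquet_eq_sum_minCoordOn (a : Finset (Fin n) → ℝ) (x : Fin n → ℝ) :
    choquet a x = ∑ S, a S * minCoordOn S x := rfl

lemma continuous_choquet (a : Finset (Fin n) → ℝ) : Continuous (choquet a) :=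
  continuous_finsetSum _ fun S _ => (continuous_minCoordOn S).const_mul (a S)

lemma posAffineEquivariant_choquet (ha0 : a ∅ = 0) (ha1 : ∑ S, a S = 1) :
    PosAffineEquivariant (choquet a) := fun c hc d x => by
  have hterm (S : Finset (Fin n)) :
      a S * minCoordOn S (fun i => c * x i + d) = c * (a S * minCoordOn S x) + a S * d := by
    rcases S.eq_empty_or_nonempty with rfl | hS
    · simp only [ha0, zero_mul, mul_zero, add_zero]
    · rw [minCoordOn_of_nonempty hS, posAffineEquivariant_inf' S hS hc]
      ring
  simp only [choquet_eq_sum_minCoordOn, hterm, Finset.sum_add_distrib, ← Finset.mul_sum,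
    ← Finset.sum_mul, ha1, one_mul]

lemma abs_choquet_sub_minCoord_le [Nonempty (Fin n)] (ha0 : a ∅ = 0) (ha1 : ∑ S, a S = 1)
    (x : Fin n → ℝ) :
    |choquet a x - minCoord x| ≤ (∑ S, |a S|) * (maxCoord x - minCoord x) :=
  calc |choquet a x - minCoord x|
      = |∑ S, a S * (minCoordOn S x - minCoord x)| := by
        simp only [choquet_eq_sum_minCoordOn, mul_sub, Finset.sum_sub_distrib, ← Finset.sum_mul,
          ha1, one_mul]
    _ ≤ ∑ S, |a S * (minCoordOn S x - minCoord x)| := Finset.abs_sum_le_sum_abs _ _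
    _ ≤ ∑ S, |a S| * (maxCoord x - minCoord x) := Finset.sum_le_sum fun S _ => by
        rcases S.eq_empty_or_nonempty with rfl | hS
        · simp [ha0]
        · rw [abs_mul]
          exact mul_le_mul_of_nonneg_left (abs_minCoordOn_sub_minCoord_le hS x) (abs_nonneg _)
    _ = (∑ S, |a S|) * (maxCoord x - minCoord x) := (Finset.sum_mul _ _ _).symm

lemma setIntegral_unitCube_choquet (ha0 : a ∅ = 0) :
    ∫ x in unitCube (Fin n), choquet a x = ∑ S, a S / ((S.card : ℝ) + 1) := by
  simp only [choquet_eq_sum_minCoordOn]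
  rw [integral_finsetSum _ fun S _ =>
    integrableOn_unitCube_of_continuous ((continuous_minCoordOn S).const_mul (a S))]
  refine Finset.sum_congr rfl fun S _ => ?_
  rcases S.eq_empty_or_nonempty with rfl | hS
  · simp [ha0]
  · rw [integral_const_mul, minCoordOn_of_nonempty hS, setIntegral_unitCube_inf', mul_one_div]

theorem orness_average_choquet_general [Nontrivial (Fin n)] (ha0 : a ∅ = 0)
    (ha1 : ∑ S, a S = 1) :
    ∫ x in unitCube (Fin n), ornessDistribution (choquet a) x =
      1 / ((n : ℝ) - 1) * ∑ S, a S * ((n : ℝ) - S.card) / ((S.card : ℝ) + 1) := by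
  have hint : IntegrableOn (ornessDistribution (choquet a)) (unitCube (Fin n)) :=
    integrableOn_ornessDistribution_of_bound (continuous_choquet a).measurable
      (abs_choquet_sub_minCoord_le ha0 ha1)
  have hterm (S : Finset (Fin n)) : a S * ((n : ℝ) - S.card) / ((S.card : ℝ) + 1) =
      (n + 1) * (a S / ((S.card : ℝ) + 1)) - a S := by
    field_simp
    ring
  rw [(posAffineEquivariant_choquet ha0 ha1).setIntegral_ornessDistribution hint,
    setIntegral_unitCube_choquet ha0, Fintype.card_fin]
  simp only [hterm, Finset.sum_sub_distrib, ← Finset.mul_sum, ha1, one_div_mul_eq_div]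

end Choquet

/-- Example 2: for `n ≥ 2` and a set function `a` with `a(∅) = 0`, `Σ_S a(S) = 1`, such that
the discrete Choquet integral `C_a` is nondecreasing in each variable, the orness average
value of `C_a` over `[0,1]^n` is `(1/(n−1)) Σ_{S ⊆ [n]} a(S)(n−|S|)/(|S|+1)`. -/
theorem orness_average_choquet (n : ℕ) (hn : 2 ≤ n) (a : Finset (Fin n) → ℝ)
    (ha0 : a ∅ = 0) (ha1 : ∑ S : Finset (Fin n), a S = 1)
    (hmono : ∀ (x : Fin n → ℝ) (j : Fin n),
      Monotone fun t : ℝ => choquet a (Function.update x j t)) :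
    (∫ x in Set.univ.pi fun _ : Fin n => Set.Ioo (0 : ℝ) 1,
        (choquet a x - Finset.univ.inf' ⟨⟨0, by omega⟩, Finset.mem_univ _⟩ x) /
          (Finset.univ.sup' ⟨⟨0, by omega⟩, Finset.mem_univ _⟩ x -
            Finset.univ.inf' ⟨⟨0, by omega⟩, Finset.mem_univ _⟩ x))
      = 1 / ((n : ℝ) - 1) *
          ∑ S : Finset (Fin n), a S * ((n : ℝ) - S.card) / ((S.card : ℝ) + 1) := by
  have : Nontrivial (Fin n) := Fin.nontrivial_iff_two_le.2 hn
  exact orness_average_choquet_general ha0 ha1
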